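/- arXiv:2304.10489 — 2 statements merged into one kernel-verified Lean document; each statement's English description precedes it below -/
import Mathlib

section
/- (Identity (10).) Let τ be a plane tree with vertices u(0), …, u(ζ(τ)−1) listed in lexicographical order and Łukasiewicz path W^↑. For every 0 ≤ m ≤ ζ(τ)−1, the sum over all k ∈ {0,…,m−1} such that u(k) ≺ u(m) (strict ancestors of u(m)) of the quantity (min_{k+1 ≤ n ≤ m} W^↑(n) − W^↑(k)) equals W^↑(m). -/
/-!
For a vertex `v = (v₁, …, v_h)` let `R(v) = ∑ l < h, (c(v₁ … v_l) - v_{l+1})` be the number of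
vertices that are right siblings of `v` or of one of its ancestors (`PlaneTree.spine`).

* `W(n) = R(u(n))` for every `n < N`. Indeed, if `u(n)` has children, then `u(n+1) = u(n)1`.
  Otherwise `u(n+1) = q(i+1)` where `qi ≼ u(n)` and every vertex strictly below `qi` on the path to
  `u(n)` is a last child. In both cases `R(u(n+1)) = R(u(n)) + c(u(n)) - 1`
  (`PlaneTree.spine_succ`); this only uses that no vertex lies strictly between `u(n)` and `u(n+1)`.
* If `u(k) ≺ u(m)` and `u(k)i` is the child of `u(k)` on the path to `u(m)`, then each `u(n)` with
  `k < n ≤ m` is a descendant of some `u(k)j` with `j ≤ i`, so that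
  `R(u(n)) ≥ R(u(k)j) ≥ R(u(k)i)`, with equality at `u(n) = u(k)i`. Hence the minimum of `W`
  over `[k+1, m]` is `R(u(k)i)`.

The sum is then `∑ l < |u(m)|, (R((u(m))_{l+1}) - R((u(m))_l))` over the prefixes `(u(m))_l` of
length `l` of `u(m)`, which telescopes to `R(u(m)) - R(∅) = W(m)`.
-/

open scoped Classical

/-- A plane tree: a nonempty finite subset of the set `𝕌` of finite sequences of
positive integers, containing the root `∅ = []`, closed under taking parents, and
such that for each vertex `u` there is `c(u) ≥ 0` with `u ++ [i]` a vertex iff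
`1 ≤ i ≤ c(u)`. -/
structure PlaneTree where
  verts : Finset (List ℕ)
  root_mem : ([] : List ℕ) ∈ verts
  parent_mem : ∀ (u : List ℕ) (j : ℕ), u ++ [j] ∈ verts → u ∈ verts
  children_spec : ∀ u ∈ verts, ∃ c : ℕ, ∀ i : ℕ, u ++ [i] ∈ verts ↔ 1 ≤ i ∧ i ≤ c

namespace PlaneTree

/-- The number of children `c(u)` of a vertex `u`. -/
noncomputable def numChildren (T : PlaneTree) (u : List ℕ) : ℕ :=
  (T.verts.filter fun v => u <+: v ∧ v.length = u.length + 1).card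

end PlaneTree

/-- The lexicographical order `≺_↑` on vertices: `v ≺_↑ w` iff `v` is a strict
prefix of `w`, or at the first disagreement the entry of `v` is smaller. -/
def lexLt (v w : List ℕ) : Prop := List.Lex (· < ·) v w

/-- The reverse-lexicographical order `≺_↓` on vertices: `v ≺_↓ w` iff `v` is a
strict prefix of `w`, or at the first disagreement the entry of `v` is larger. -/
def rlexLt (v w : List ℕ) : Prop := List.Lex (· > ·) v w

/-! ### Lexicographical order on lists -/

theorem lex_cons_le (a b : ℕ) (p q : List ℕ) :
    a :: p ≤ b :: q ↔ a < b ∨ a = b ∧ p ≤ q := by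
  rw [← not_lt, ← not_lt, List.cons_lt_cons_iff]
  generalize (q < p) = h
  grind

theorem lex_nil_le (a : List ℕ) : [] ≤ a := by
  rw [← not_lt]
  simp

theorem lex_append_lt (p a b : List ℕ) : p ++ a < p ++ b ↔ a < b := by
  induction p with
  | nil => simp
  | cons x p ih => simp [ih]

theorem lex_append_le (p a b : List ℕ) : p ++ a ≤ p ++ b ↔ a ≤ b := by
  rw [← not_lt, ← not_lt, lex_append_lt]

/-- The descendants of `p` form an interval of the lexicographical order starting at `p`. -/
theorem lex_convex (p x b : List ℕ) (h1 : p ≤ x) (h2 : x ≤ p ++ b) : ∃ w, x = p ++ w := by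
  induction p generalizing x with
  | nil => exact ⟨x, rfl⟩
  | cons a p ih =>
    cases x with
    | nil => exact absurd h1 (not_le.2 (by simp))
    | cons y x =>
      rw [List.cons_append] at h2
      rw [lex_cons_le] at h1 h2
      have hay : a = y := by omega
      subst hay
      obtain ⟨w, hw⟩ := ih x (by simpa using h1) (by simpa using h2)
      exact ⟨w, by simp [hw]⟩

namespace PlaneTree

/-! ### Vertices of a plane tree -/

theorem snoc_mem_iff (T : PlaneTree) (v : List ℕ) (i : ℕ) :
    v ++ [i] ∈ T.verts ↔ v ∈ T.verts ∧ 1 ≤ i ∧ i ≤ T.numChildren v := by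
  by_cases hv : v ∈ T.verts
  · obtain ⟨c, hc⟩ := T.children_spec v hv
    have hcard : T.numChildren v = c := by
      have : (T.verts.filter fun w => v <+: w ∧ w.length = v.length + 1)
          = (Finset.Icc 1 c).image (fun i => v ++ [i]) := by
        ext w
        simp only [Finset.mem_filter, Finset.mem_image, Finset.mem_Icc]
        constructor
        · rintro ⟨hw, ⟨t, rfl⟩, hl⟩
          have ht : t.length = 1 := by simpa using hl
          obtain ⟨a, rfl⟩ := List.length_eq_one_iff.1 ht
          exact ⟨a, (hc a).1 hw, rfl⟩
        · rintro ⟨a, ha, rfl⟩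
          exact ⟨(hc a).2 ha, List.prefix_append _ _, by simp⟩
      rw [numChildren, this, Finset.card_image_of_injective _ (fun a b h => by simpa using h)]
      simp
    rw [hcard]
    simp [hc, hv]
  · simp only [hv, false_and, iff_false]
    exact fun h => hv (T.parent_mem v i h)

theorem prefix_mem (T : PlaneTree) (p q : List ℕ) (h : p ++ q ∈ T.verts) : p ∈ T.verts := by
  induction q using List.reverseRecOn with
  | nil => simpa using h
  | append_singleton q a ih =>
    rw [← List.append_assoc] at h
    exact ih (T.parent_mem _ _ h)

/-! ### Right siblings along an ancestral line -/

/-- The number `R(v)` of right siblings of `v` and of its ancestors: the sum, over the vertices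
`p ≺ v`, of the number of children of `p` to the right of the one on the path to `v`. It is
integer-valued, and has this meaning only when `v` is a vertex of the tree. -/
noncomputable def spine (T : PlaneTree) (v : List ℕ) : ℤ :=
  ∑ l ∈ Finset.range v.length, ((T.numChildren (v.take l) : ℤ) - v.getD l 0)

theorem spine_nil (T : PlaneTree) : T.spine [] = 0 := by simp [spine]

theorem spine_snoc (T : PlaneTree) (v : List ℕ) (i : ℕ) :
    T.spine (v ++ [i]) = T.spine v + T.numChildren v - i := by
  unfold spine
  rw [List.length_append, List.length_singleton, Finset.sum_range_succ]
  have : ∀ l ∈ Finset.range v.length,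
      ((T.numChildren ((v ++ [i]).take l) : ℤ) - (v ++ [i]).getD l 0)
      = (T.numChildren (v.take l) : ℤ) - v.getD l 0 := by
    intro l hl
    have hl' := Finset.mem_range.1 hl
    rw [List.take_append_of_le_length hl'.le, List.getD_append _ _ _ _ hl']
  rw [Finset.sum_congr rfl this]
  simp
  ring

theorem spine_le_append (T : PlaneTree) (p q : List ℕ) (h : p ++ q ∈ T.verts) :
    T.spine p ≤ T.spine (p ++ q) := by
  induction q using List.reverseRecOn with
  | nil => simp
  | append_singleton q a ih =>
    rw [← List.append_assoc] at h ⊢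
    have h3 := (T.snoc_mem_iff _ _).1 h
    have := ih h3.1
    rw [spine_snoc]
    omega

/-- Passing from a vertex `v` to its lexicographical successor `v'` changes `R` by `c(v) - 1`. -/
theorem spine_succ (T : PlaneTree) (v v' : List ℕ) (hv : v ∈ T.verts) (hv' : v' ∈ T.verts)
    (hlt : v < v') (hgap : ∀ x ∈ T.verts, v < x → v' ≤ x) :
    T.spine v' = T.spine v + T.numChildren v - 1 := by
  rcases List.eq_nil_or_concat v' with rfl | ⟨q, j, hq⟩
  · simp at hlt
  rw [List.concat_eq_append] at hq
  subst hq
  obtain ⟨hqT, hj1, hjc⟩ := (T.snoc_mem_iff _ _).1 hv'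
  have hqv : q ≤ v := by
    by_contra! h
    have h1 := hgap q hqT h
    have h2 : q ++ [] < q ++ [j] := (lex_append_lt _ _ _).2 (by simp)
    rw [List.append_nil] at h2
    exact absurd h2 (not_lt.2 h1)
  obtain ⟨w, rfl⟩ := lex_convex q v [j] hqv hlt.le
  cases w with
  | nil =>
    rw [List.append_nil] at *
    have h1 : q ++ [1] ∈ T.verts := (T.snoc_mem_iff _ _).2 ⟨hqT, le_rfl, by omega⟩
    have h2 : q ++ [] < q ++ [1] := (lex_append_lt _ _ _).2 (by simp)
    have h3 := hgap _ h1 (by simpa using h2)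
    rw [lex_append_le, lex_cons_le] at h3
    have : j = 1 := by
      rcases h3 with h | h
      · omega
      · exact h.1
    subst this
    rw [spine_snoc]
    simp
  | cons i w =>
    have hij : i < j := by
      have := (lex_append_lt _ _ _).1 hlt
      rw [List.cons_lt_cons_iff] at this
      simpa using this
    have hi1 : q ++ [i + 1] ∈ T.verts := (T.snoc_mem_iff _ _).2 ⟨hqT, by omega, by omega⟩
    have h3 := hgap _ hi1 ((lex_append_lt _ _ _).2 (by simp [List.cons_lt_cons_iff]))
    rw [lex_append_le, lex_cons_le] at h3
    have hj : j = i + 1 := by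
      rcases h3 with h | h
      · omega
      · exact h.1
    subst hj
    -- A vertex below `q ++ [i]` precedes `v'`, hence cannot follow `v`.
    have hno : ∀ x, q ++ (i :: x) ∈ T.verts → ¬ w < x := by
      intro x hx hwx
      have h := hgap _ hx ((lex_append_lt _ _ _).2 (by simp [hwx]))
      rw [lex_append_le, lex_cons_le] at h
      omega
    have hc0 : T.numChildren (q ++ i :: w) = 0 := by
      by_contra hne
      have hm : (q ++ i :: w) ++ [1] ∈ T.verts :=
        (T.snoc_mem_iff _ _).2 ⟨hv, le_rfl, by omega⟩
      refine hno (w ++ [1]) (by simpa using hm) ?_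
      have : w ++ [] < w ++ [1] := (lex_append_lt _ _ _).2 (by simp)
      simpa using this
    -- Below `q ++ [i]`, the path to `v` only visits last children, which leave `R` unchanged.
    have hspine : ∀ s t : List ℕ, w = s ++ t →
        T.spine (q ++ i :: s) = T.spine (q ++ [i]) := by
      intro s
      induction s using List.reverseRecOn with
      | nil => intro t _; rfl
      | append_singleton s a ih =>
        intro t ht
        have e : q ++ i :: (s ++ [a]) = (q ++ i :: s) ++ [a] := by simp
        have hmem : (q ++ i :: s) ++ [a] ∈ T.verts := by
          apply T.prefix_mem _ t
          simpa [ht] using hv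
        obtain ⟨hsT, ha1, hac⟩ := (T.snoc_mem_iff _ _).1 hmem
        have hac' : T.numChildren (q ++ i :: s) = a := by
          by_contra hne
          have hm : (q ++ i :: s) ++ [a + 1] ∈ T.verts :=
            (T.snoc_mem_iff _ _).2 ⟨hsT, by omega, by omega⟩
          refine hno (s ++ [a + 1]) (by simpa using hm) ?_
          rw [ht, List.append_assoc, lex_append_lt]
          simp [List.cons_lt_cons_iff]
        rw [e, spine_snoc, hac', ih ([a] ++ t) (by simpa using ht)]
        ring
    rw [hc0, hspine w [] (by simp), spine_snoc, spine_snoc]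
    push_cast
    ring

end PlaneTree

/-! ### The Łukasiewicz path -/

/-- Identity (10): for every `0 ≤ m ≤ ζ(τ)−1`, the sum over the strict ancestors
`u(k)` of `u(m)` (with `k ∈ {0,…,m−1}`) of `min_{k+1 ≤ n ≤ m} W^↑(n) − W^↑(k)`
equals `W^↑(m)`. -/
theorem sum_over_strict_ancestors_eq_lukasiewicz
    (T : PlaneTree) (N : ℕ) (hN : N = T.verts.card)
    (u : ℕ → List ℕ)
    (hu_mem : ∀ n < N, u n ∈ T.verts)
    (hu_surj : ∀ v ∈ T.verts, ∃ n < N, u n = v)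
    (hu_mono : ∀ i j : ℕ, i < j → j < N → lexLt (u i) (u j))
    (W : ℕ → ℤ)
    (hW0 : W 0 = 0)
    (hWrec : ∀ n < N, W (n + 1) = W n + T.numChildren (u n) - 1)
    (m : ℕ) (hm : m < N) :
    ∑ k ∈ (Finset.range m).filter (fun k => u k <+: u m ∧ u k ≠ u m),
        (sInf (W '' Set.Icc (k + 1) m) - W k) = W m := by
  have hN0 : 0 < N := by omega
  have hlt : ∀ i j, i < N → j < N → (u i < u j ↔ i < j) := by
    intro i j hi hj
    refine ⟨fun h => ?_, fun h => hu_mono i j h hj⟩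
    by_contra! hji
    rcases hji.eq_or_lt with rfl | hji
    · exact lt_irrefl _ h
    · exact lt_asymm h (hu_mono j i hji hi)
  have hle : ∀ i j, i < N → j < N → (u i ≤ u j ↔ i ≤ j) := by
    intro i j hi hj
    rw [← not_lt, ← not_lt, hlt j i hj hi]
  have hu0 : u 0 = [] := by
    obtain ⟨n, hn, hun⟩ := hu_surj [] T.root_mem
    have := (hle 0 n hN0 hn).2 (Nat.zero_le n)
    rw [hun] at this
    exact le_antisymm this (lex_nil_le _)
  have hW : ∀ n < N, W n = T.spine (u n) := by
    intro n
    induction n with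
    | zero => intro _; rw [hW0, hu0, T.spine_nil]
    | succ n ih =>
      intro hn
      rw [hWrec n (by omega), ih (by omega)]
      refine (T.spine_succ _ _ (hu_mem n (by omega)) (hu_mem _ hn)
        ((hlt _ _ (by omega) hn).2 (by omega)) ?_).symm
      intro x hx hux
      obtain ⟨r, hr, rfl⟩ := hu_surj x hx
      exact (hle _ _ hn hr).2 ((hlt _ _ (by omega) hr).1 hux)
  have hterm : ∀ k i w, k < m → u m = u k ++ i :: w →
      sInf (W '' Set.Icc (k + 1) m) = T.spine (u k ++ [i]) := by
    intro k i w hk hmk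
    have hkT := hu_mem k (by omega)
    have hiT : u k ++ [i] ∈ T.verts := by
      apply T.prefix_mem _ w
      have := hu_mem m hm
      rw [hmk] at this
      simpa using this
    refine IsLeast.csInf_eq ⟨?_, ?_⟩
    · obtain ⟨r, hr, hur⟩ := hu_surj _ hiT
      refine ⟨r, ⟨?_, ?_⟩, by rw [hW r hr, hur]⟩
      · apply (hlt k r (by omega) hr).1
        rw [hur]
        have : u k ++ [] < u k ++ [i] := (lex_append_lt _ _ _).2 (by simp)
        simpa using this
      · apply (hle r m hr hm).1
        rw [hur, hmk, lex_append_le, lex_cons_le]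
        exact Or.inr ⟨rfl, lex_nil_le w⟩
    · rintro _ ⟨n, ⟨hn1, hn2⟩, rfl⟩
      have h1 : u k < u n := (hlt k n (by omega) (by omega)).2 (by omega)
      have h2 : u n ≤ u k ++ i :: w := by
        rw [← hmk]
        exact (hle n m (by omega) hm).2 hn2
      have hnT := hu_mem n (by omega)
      rw [hW n (by omega)]
      obtain ⟨x, hx⟩ := lex_convex _ _ _ h1.le h2
      rw [hx] at h1 h2 hnT ⊢
      cases x with
      | nil => simp at h1
      | cons j x =>
        rw [lex_append_le, lex_cons_le] at h2
        have e : u k ++ j :: x = (u k ++ [j]) ++ x := by simp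
        rw [e] at hnT ⊢
        refine le_trans ?_ (T.spine_le_append _ _ hnT)
        rw [T.spine_snoc, T.spine_snoc]
        omega
  -- Strict ancestors of `u m` are indexed by their length, ranging over `0, …, |u m| - 1`.
  have hsum : ∑ k ∈ (Finset.range m).filter (fun k => u k <+: u m ∧ u k ≠ u m),
        (sInf (W '' Set.Icc (k + 1) m) - W k)
      = ∑ l ∈ Finset.range (u m).length,
        (T.spine ((u m).take (l + 1)) - T.spine ((u m).take l)) := by
    refine Finset.sum_bij (fun k _ => (u k).length) ?_ ?_ ?_ ?_
    · intro k hk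
      simp only [Finset.mem_filter, Finset.mem_range] at hk ⊢
      exact lt_of_le_of_ne hk.2.1.length_le (fun h => hk.2.2 (hk.2.1.eq_of_length h))
    · intro k hk k' hk' h
      simp only [Finset.mem_filter, Finset.mem_range] at hk hk'
      have e : u k = u k' := by
        rw [List.prefix_iff_eq_take.1 hk.2.1, List.prefix_iff_eq_take.1 hk'.2.1, h]
      exact le_antisymm ((hle _ _ (by omega) (by omega)).1 e.le)
        ((hle _ _ (by omega) (by omega)).1 e.ge)
    · intro l hl
      have hl' := Finset.mem_range.1 hl
      have htd := List.take_append_drop l (u m)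
      obtain ⟨r, hr, hur⟩ := hu_surj ((u m).take l)
        (T.prefix_mem _ ((u m).drop l) (by rw [htd]; exact hu_mem m hm))
      have hlen : (u r).length = l := by rw [hur, List.length_take]; omega
      have hne : u r ≠ u m := fun h => by rw [h] at hlen; omega
      have hpre : u r <+: u m := by rw [hur]; exact List.take_prefix _ _
      refine ⟨r, ?_, hlen⟩
      simp only [Finset.mem_filter, Finset.mem_range]
      refine ⟨(hlt r m hr hm).1 (lt_of_le_of_ne ?_ hne), hpre, hne⟩
      obtain ⟨t, ht⟩ := hpre
      have : u r ++ [] ≤ u r ++ t := (lex_append_le _ _ _).2 (lex_nil_le _)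
      rwa [List.append_nil, ht] at this
    · intro k hk
      simp only [Finset.mem_filter, Finset.mem_range] at hk
      obtain ⟨hkm, ⟨t, ht⟩, hne⟩ := hk
      cases t with
      | nil => simp at ht; exact absurd ht hne
      | cons i w =>
        rw [hterm k i w hkm ht.symm, hW k (by omega), ← ht]
        have e : u k ++ i :: w = (u k ++ [i]) ++ w := by simp
        rw [List.take_left, e, List.take_left' (by simp)]
  rw [hsum, Finset.sum_range_sub (fun l => T.spine ((u m).take l)), hW m hm]
  simp [T.spine_nil]
end

section
/- (Identity (12).) Let τ be a plane tree with N = ζ(τ) vertices, u(0), …, u(N−1) its vertices in lexicographical order, W^↑ its Łukasiewicz path and W^↓ its reverse-Łukasiewicz path, and write ΔW^↑(n+1) = W^↑(n+1) − W^↑(n). For every 0 ≤ m ≤ N−1, (∑ over all k with u(k) ≼ u(m) of ΔW^↑(k+1)) − min(ΔW^↑(m+1), 0) = W^↑(m) + W^↓(m̃) + max(ΔW^↑(m+1), 0), where m̃ = N − 1 − m + |u(m)| − D(m) and D(m) is the number of strict descendants of u(m). -/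
/-!
Write `x(v) = c(v) - 1` and fix a vertex `u = u(m)`. Relative to `u`, every vertex is a strict
ancestor, a (weak) descendant, or lies strictly to the left or strictly to the right of `u`.
The vertices preceding `u` for `≺_↑` are the strict ancestors and those on the left; the vertices
preceding `u` for `≺_↓` are the strict ancestors and those on the right
(`indicator_lexLt_add_rlexLt`). Hence, for any weight `f`,
`∑_{v ≺_↑ u} f + ∑_{v ≺_↓ u} f + ∑_{u ≼ v} f = ∑_T f + ∑_{v ≺ u} f` (`sum_lexLt_add_rlexLt`).

* With `f = 1`, this says that `u` has rank `m̃` in the reverse-lexicographical listing, so that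
  `W^↓(m̃)` is the sum of `x` over `{v ≺_↓ u}`, while `W^↑(m)` is its sum over `{v ≺_↑ u}`.
* With `f = x`, both the sum over the whole tree and the sum over the subtree at `u` equal `-1`,
  because every vertex of a subtree except its root is the child of exactly one vertex of that
  subtree (`sum_subtree`). So `W^↑(m) + W^↓(m̃) = ∑_{v ≺ u} x(v)`.

The stated identity differs from the last one by `x(u) = min(x(u), 0) + max(x(u), 0)`.
-/

open scoped Classical

/-- In indicator form: strict ancestors `v` of `u` precede `u` for both orders, descendants of `u`
(including `u`) for neither, and every other vertex for exactly one of the two. -/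
lemma indicator_lexLt_add_rlexLt (v u : List ℕ) :
    (if lexLt v u then (1 : ℤ) else 0) + (if rlexLt v u then 1 else 0) + (if u <+: v then 1 else 0)
      = 1 + (if v <+: u ∧ v ≠ u then 1 else 0) := by
  induction v generalizing u with
  | nil => cases u <;> simp [lexLt, rlexLt]
  | cons a v ih =>
    cases u with
    | nil => simp [lexLt, rlexLt]
    | cons b u =>
      have h := ih u
      simp only [lexLt, rlexLt] at h
      simp only [lexLt, rlexLt, List.cons_lex_cons_iff, List.cons_prefix_cons, ne_eq, List.cons.injEq]
      rcases lt_trichotomy a b with hab | hab | hab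
      · simp [hab, hab.ne, hab.ne', hab.not_gt]
      · subst hab
        simpa using h
      · simp [hab, hab.ne, hab.ne', hab.not_gt]

lemma sum_lexLt_add_rlexLt (S : Finset (List ℕ)) (u : List ℕ) (f : List ℕ → ℤ) :
    ∑ v ∈ S.filter (fun v => lexLt v u), f v + ∑ v ∈ S.filter (fun v => rlexLt v u), f v
        + ∑ v ∈ S.filter (fun v => u <+: v), f v
      = ∑ v ∈ S, f v + ∑ v ∈ S.filter (fun v => v <+: u ∧ v ≠ u), f v := by
  simp only [Finset.sum_filter, ← Finset.sum_add_distrib]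
  refine Finset.sum_congr rfl fun v _ => ?_
  have h := congrArg (· * f v) (indicator_lexLt_add_rlexLt v u)
  simpa only [add_mul, ite_mul, one_mul, zero_mul] using h

lemma lexLt_asymm {v w : List ℕ} (h : lexLt v w) : ¬ lexLt w v :=
  asymm (r := List.Lex (· < ·)) h

lemma rlexLt_asymm {v w : List ℕ} (h : rlexLt v w) : ¬ rlexLt w v :=
  asymm (r := List.Lex (· > ·)) h

lemma PlaneTree.mem_of_prefix (T : PlaneTree) {p v : List ℕ} (hv : v ∈ T.verts) (h : p <+: v) :
    p ∈ T.verts := by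
  obtain ⟨s, rfl⟩ := h
  induction s using List.reverseRecOn with
  | nil => simpa using hv
  | append_singleton s a ih =>
    exact ih (T.parent_mem (p ++ s) a (by simpa using hv))

lemma PlaneTree.card_strict_ancestors (T : PlaneTree) {u : List ℕ} (hu : u ∈ T.verts) :
    (T.verts.filter (fun v => v <+: u ∧ v ≠ u)).card = u.length := by
  have h : T.verts.filter (fun v => v <+: u ∧ v ≠ u)
      = (Finset.range u.length).image (fun i => u.take i) := by
    ext v
    simp only [Finset.mem_filter, Finset.mem_image, Finset.mem_range]
    constructor
    · rintro ⟨-, hp, hne⟩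
      refine ⟨v.length, ?_, (List.prefix_iff_eq_take.1 hp).symm⟩
      exact lt_of_le_of_ne hp.length_le fun hl => hne (hp.eq_of_length hl)
    · rintro ⟨i, hi, rfl⟩
      refine ⟨T.mem_of_prefix hu (List.take_prefix i u), List.take_prefix i u, fun h => ?_⟩
      have := congrArg List.length h
      simp only [List.length_take] at this
      omega
  rw [h, Finset.card_image_of_injOn, Finset.card_range]
  intro i hi j hj hij
  have := congrArg List.length hij
  simp only [Finset.coe_range, Set.mem_Iio, List.length_take] at hi hj this
  omega

/-- The increments `c(v) - 1` add up to `-1` over the subtree at any vertex: its vertices other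
than `u` are partitioned according to their parents. -/
lemma PlaneTree.sum_subtree (T : PlaneTree) {u : List ℕ} (hu : u ∈ T.verts) :
    ∑ v ∈ T.verts.filter (fun v => u <+: v), ((T.numChildren v : ℤ) - 1) = -1 := by
  set S := T.verts.filter (fun v => u <+: v) with hS
  have huS : u ∈ S := by simp [hS, hu]
  have key : (S.erase u).card = ∑ v ∈ S, T.numChildren v := by
    rw [Finset.card_eq_sum_card_fiberwise (f := List.dropLast) (t := S)]
    · refine Finset.sum_congr rfl fun v hv => ?_
      unfold PlaneTree.numChildren
      congr 1
      ext w
      simp only [hS, Finset.mem_filter, Finset.mem_erase] at hv ⊢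
      constructor
      · rintro ⟨⟨hne, hw, hp⟩, rfl⟩
        have hw0 : w ≠ [] := by
          rintro rfl
          exact hne (List.prefix_nil.1 hp).symm
        have := List.length_pos_of_ne_nil hw0
        refine ⟨hw, List.dropLast_prefix w, ?_⟩
        rw [List.length_dropLast]
        omega
      · rintro ⟨hw, hp, hl⟩
        refine ⟨⟨?_, hw, hv.2.trans hp⟩, ?_⟩
        · rintro rfl
          have := hv.2.length_le
          omega
        · rw [List.dropLast_eq_take, hl, Nat.add_sub_cancel]
          exact (List.prefix_iff_eq_take.1 hp).symm
    · intro w hw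
      simp only [hS, Finset.coe_erase, Finset.coe_filter, Set.mem_sdiff, Set.mem_ofPred_eq,
        Set.mem_singleton_iff] at hw ⊢
      obtain ⟨⟨hw, hp⟩, hne⟩ := hw
      refine ⟨T.mem_of_prefix hw (List.dropLast_prefix w), ?_⟩
      refine List.prefix_of_prefix_length_le hp (List.dropLast_prefix w) ?_
      have : u.length < w.length :=
        lt_of_le_of_ne hp.length_le fun hl => hne (hp.eq_of_length hl).symm
      rw [List.length_dropLast]
      omega
  have hcard := Finset.card_erase_add_one huS
  rw [Finset.sum_sub_distrib, ← Nat.cast_sum, ← key]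
  simp only [Finset.sum_const, nsmul_eq_mul, mul_one]
  omega

section Enumeration

variable {r : List ℕ → List ℕ → Prop} {S : Finset (List ℕ)} {N : ℕ} {e : ℕ → List ℕ}

lemma enum_injOn (hr : ∀ {v w}, r v w → ¬ r w v)
    (hmono : ∀ i j : ℕ, i < j → j < N → r (e i) (e j)) :
    Set.InjOn e (Set.Iio N) := by
  intro i hi j hj hij
  rcases lt_trichotomy i j with h | h | h
  · have h1 := hmono i j h hj
    rw [hij] at h1
    exact absurd h1 (hr h1)
  · exact h
  · have h1 := hmono j i h hi
    rw [hij] at h1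
    exact absurd h1 (hr h1)

/-- In an increasing enumeration `e` of `S`, the terms before `e n` are the elements of `S`
smaller than `e n`. -/
lemma sum_range_enum (hr : ∀ {v w}, r v w → ¬ r w v)
    (hmem : ∀ n < N, e n ∈ S) (hsurj : ∀ v ∈ S, ∃ n < N, e n = v)
    (hmono : ∀ i j : ℕ, i < j → j < N → r (e i) (e j))
    {n : ℕ} (hn : n < N) (f : List ℕ → ℤ) :
    ∑ i ∈ Finset.range n, f (e i) = ∑ v ∈ S.filter (fun v => r v (e n)), f v := by
  have h : S.filter (fun v => r v (e n)) = (Finset.range n).image e := by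
    ext v
    simp only [Finset.mem_filter, Finset.mem_image, Finset.mem_range]
    constructor
    · rintro ⟨hv, hlt⟩
      obtain ⟨i, hi, rfl⟩ := hsurj v hv
      refine ⟨i, ?_, rfl⟩
      rcases lt_trichotomy i n with h | h | h
      · exact h
      · subst h
        exact absurd hlt (hr hlt)
      · exact absurd (hmono n i h hi) (hr hlt)
    · rintro ⟨i, hi, rfl⟩
      exact ⟨hmem i (hi.trans hn), hmono i n hi hn⟩
  rw [h, Finset.sum_image]
  intro i hi j hj
  simp only [Finset.coe_range, Set.mem_Iio] at hi hj
  exact enum_injOn (r := r) (e := e) hr hmono (hi.trans hn) (hj.trans hn)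

/-- The path built from the recursion `W (n + 1) = W n + c (e n) - 1` is a partial sum. -/
lemma path_eq_sum {W : ℕ → ℤ} {c : List ℕ → ℕ} (h0 : W 0 = 0)
    (hrec : ∀ n < N, W (n + 1) = W n + c (e n) - 1) {n : ℕ} (hn : n ≤ N) :
    W n = ∑ i ∈ Finset.range n, ((c (e i) : ℤ) - 1) := by
  induction n with
  | zero => simpa using h0
  | succ k ih =>
    rw [hrec k (by omega), ih (by omega), Finset.sum_range_succ]
    ring

end Enumeration

/-- Identity (12): for every `0 ≤ m ≤ N−1`,
`(∑_{k : u(k) ≼ u(m)} ΔW^↑(k+1)) − min(ΔW^↑(m+1), 0)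
  = W^↑(m) + W^↓(m̃) + max(ΔW^↑(m+1), 0)`,
where `m̃ = N − 1 − m + |u(m)| − D(m)` and `D(m)` is the number of strict
descendants of `u(m)`. -/
theorem sigma_eq_lukasiewicz_add_reverse
    (T : PlaneTree) (N : ℕ) (hN : N = T.verts.card)
    (uU : ℕ → List ℕ)
    (huU_mem : ∀ n < N, uU n ∈ T.verts)
    (huU_surj : ∀ v ∈ T.verts, ∃ n < N, uU n = v)
    (huU_mono : ∀ i j : ℕ, i < j → j < N → lexLt (uU i) (uU j))
    (uD : ℕ → List ℕ)
    (huD_mem : ∀ n < N, uD n ∈ T.verts)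
    (huD_surj : ∀ v ∈ T.verts, ∃ n < N, uD n = v)
    (huD_mono : ∀ i j : ℕ, i < j → j < N → rlexLt (uD i) (uD j))
    (WU WD : ℕ → ℤ)
    (hWU0 : WU 0 = 0)
    (hWUrec : ∀ n < N, WU (n + 1) = WU n + T.numChildren (uU n) - 1)
    (hWD0 : WD 0 = 0)
    (hWDrec : ∀ n < N, WD (n + 1) = WD n + T.numChildren (uD n) - 1)
    (m : ℕ) (hm : m < N)
    (D : ℕ) (hD : D = Set.ncard {v | v ∈ T.verts ∧ uU m <+: v ∧ v ≠ uU m})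
    (mt : ℕ) (hmt : mt = N - 1 - m + (uU m).length - D) :
    (∑ k ∈ (Finset.range N).filter (fun k => uU k <+: uU m), (WU (k + 1) - WU k))
        - min (WU (m + 1) - WU m) 0
      = WU m + WD mt + max (WU (m + 1) - WU m) 0 := by
  set u := uU m with hu
  have huT : u ∈ T.verts := huU_mem m hm
  obtain ⟨n, hn, hnu⟩ := huD_surj u huT
  have up := fun f => sum_range_enum (r := lexLt) lexLt_asymm huU_mem huU_surj huU_mono hm f
  have down := fun f => sum_range_enum (r := rlexLt) rlexLt_asymm huD_mem huD_surj huD_mono hn f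
  rw [← hu] at up
  rw [hnu] at down
  -- The rank of `u` in the reverse-lexicographical listing is `m̃`.
  have hmtn : mt = n := by
    have h := sum_lexLt_add_rlexLt T.verts u (fun _ => 1)
    rw [← up, ← down] at h
    simp only [Finset.sum_const, nsmul_eq_mul, mul_one, Finset.card_range,
      T.card_strict_ancestors huT, ← hN] at h
    have hDcard : D + 1 = (T.verts.filter (fun v => u <+: v)).card := by
      have hmem : u ∈ T.verts.filter (fun v => u <+: v) := by simp [huT]
      rw [← Finset.card_erase_add_one hmem, hD, ← Set.ncard_coe_finset]
      congr 2
      ext v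
      simp only [Set.mem_ofPred_eq, Finset.coe_erase, Finset.coe_filter, Set.mem_sdiff,
        Set.mem_singleton_iff]
      tauto
    omega
  have hWU := path_eq_sum hWU0 hWUrec hm.le
  have hWD := path_eq_sum hWD0 hWDrec hn.le
  rw [up (fun v => (T.numChildren v : ℤ) - 1)] at hWU
  rw [down (fun v => (T.numChildren v : ℤ) - 1)] at hWD
  have hsplit := sum_lexLt_add_rlexLt T.verts u (fun v => (T.numChildren v : ℤ) - 1)
  have hsub := T.sum_subtree huT
  -- The whole tree is the subtree at the root.
  have htot : ∑ v ∈ T.verts, ((T.numChildren v : ℤ) - 1) = -1 := by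
    simpa using T.sum_subtree T.root_mem
  have hanc : ∑ k ∈ (Finset.range N).filter (fun k => uU k <+: u), (WU (k + 1) - WU k)
      = ∑ v ∈ T.verts.filter (fun v => v <+: u ∧ v ≠ u), ((T.numChildren v : ℤ) - 1)
        + ((T.numChildren u : ℤ) - 1) := by
    have hmem : u ∈ T.verts.filter (fun v => v <+: u) := by simp [huT]
    have herase : T.verts.filter (fun v => v <+: u ∧ v ≠ u)
        = (T.verts.filter (fun v => v <+: u)).erase u := by
      ext v
      simp only [Finset.mem_filter, Finset.mem_erase]
      tauto
    rw [herase, Finset.sum_erase_add _ _ hmem]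
    refine Finset.sum_bij (fun k _ => uU k) ?_ ?_ ?_ ?_
    · intro k hk
      simp only [Finset.mem_filter, Finset.mem_range] at hk ⊢
      exact ⟨huU_mem k hk.1, hk.2⟩
    · intro i hi j hj hij
      simp only [Finset.mem_filter, Finset.mem_range] at hi hj
      exact enum_injOn (r := lexLt) lexLt_asymm huU_mono hi.1 hj.1 hij
    · intro v hv
      simp only [Finset.mem_filter] at hv
      obtain ⟨k, hk, rfl⟩ := huU_surj v hv.1
      exact ⟨k, by simpa [hk] using hv.2, rfl⟩
    · intro k hk
      simp only [Finset.mem_filter, Finset.mem_range] at hk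
      rw [hWUrec k hk.1]
      ring
  have hx : WU (m + 1) - WU m = (T.numChildren u : ℤ) - 1 := by
    rw [hWUrec m hm]
    ring
  have hmm := min_add_max ((T.numChildren u : ℤ) - 1) 0
  rw [hanc, hx, hmtn]
  linarith
end
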